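/- Both the numerator and denominator appearing in the L'Hôpital computation of the τ-score vanish at the origin in the following sense. Fix n ≥ 1, integers m_t ≥ 1 and 0 ≤ y_t ≤ m_t, vectors x_t ∈ ℝʳ, β ∈ ℝʳ, and an n × n symmetric positive-definite matrix R. Define Λ(s) = ∫_{ℝⁿ} exp( Σ_{t=1}^n [ y_t (x_tᵀβ + s α_t) − m_t b(x_tᵀβ + s α_t) ] ) dN(0, R)(α) for s ∈ ℝ, where N(0, R) is the centered multivariate normal distribution with covariance R. Then Λ is differentiable at s = 0 and Λ'(0) = 0. -/

import Mathlib

/-!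
Write `Λ(s) = ∫ L(s α) g(α) dα`, where `L(α) = exp(∑ₜ [yₜ (xₜᵀβ + αₜ) - mₜ b(xₜᵀβ + αₜ)])` is the
conditional likelihood and `g` is the density of `N(0, R)`. Since `0 ≤ y ≤ m` and
`b(w) ≥ max(0, w)`, each summand is nonpositive, and its derivative `y - m ḃ(w)` is at most `m` in
absolute value; as `exp` is `1`-Lipschitz on `(-∞, 0]`, the function `L` is Lipschitz. Hence the
difference quotients of `s ↦ L(s α) g(α)` are dominated by a multiple of `‖α‖ |g(α)|`, and
dominated convergence gives `Λ'(0) = DL(0) (∫ α g(α) dα)`. The first moment of `g` vanishes by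
symmetry.
-/

open MeasureTheory Real Finset Matrix

noncomputable section

/-- `b(w) = log(1 + e^w)`. -/
def bfun (w : ℝ) : ℝ := Real.log (1 + Real.exp w)

/-- The density of the centered multivariate normal `N(0, R)` on `ℝⁿ`:
`g(α, R) = (2π)^{−n/2} det(R)^{−1/2} exp(−(1/2) αᵀ R⁻¹ α)`. -/
def mvnDens {n : ℕ} (R : Matrix (Fin n) (Fin n) ℝ) (α : Fin n → ℝ) : ℝ :=
  (2 * Real.pi) ^ (-(n : ℝ) / 2) * R.det ^ (-(1 : ℝ) / 2)
    * Real.exp (-(1 / 2) * (α ⬝ᵥ (R⁻¹ *ᵥ α)))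

section LipschitzFunctions

lemma lipschitzOnWith_exp_Iic_zero : LipschitzOnWith 1 Real.exp (Set.Iic 0) := by
  refine (convex_Iic 0).lipschitzOnWith_of_nnnorm_deriv_le
    (fun w _ => Real.differentiableAt_exp) fun w hw => ?_
  rw [Real.deriv_exp, ← NNReal.coe_le_coe, coe_nnnorm, Real.norm_of_nonneg (Real.exp_pos w).le]
  exact Real.exp_le_one_iff.2 hw

lemma lipschitzWith_sum_comp_apply {ι F : Type*} [Fintype ι] {X : ι → Type*}
    [∀ t, PseudoMetricSpace (X t)] [SeminormedAddCommGroup F] {f : ∀ t, X t → F}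
    {K : ι → NNReal} (hf : ∀ t, LipschitzWith (K t) (f t)) :
    LipschitzWith (∑ t, K t) fun α : ∀ t, X t => ∑ t, f t (α t) := by
  refine LipschitzWith.of_dist_le_mul fun α α' => ?_
  calc dist (∑ t, f t (α t)) (∑ t, f t (α' t))
      ≤ ∑ t, dist (f t (α t)) (f t (α' t)) := dist_sum_sum_le _ _ _
    _ ≤ ∑ t, K t * dist α α' := by
        gcongr with t
        exact (hf t).dist_le_mul_of_le (dist_le_pi_dist α α' t)
    _ = ↑(∑ t, K t) * dist α α' := by rw [NNReal.coe_sum, Finset.sum_mul]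

end LipschitzFunctions

section Integrals

variable {E F : Type*} [NormedAddCommGroup E] [NormedSpace ℝ E] [MeasurableSpace E] [BorelSpace E]
  [NormedAddCommGroup F] [NormedSpace ℝ F]

lemma integral_eq_zero_of_odd {G : Type*} [MeasurableSpace G] [AddGroup G] [MeasurableNeg G]
    {μ : Measure G} [μ.IsNegInvariant] {f : G → F} (hf : Function.Odd f) : ∫ v, f v ∂μ = 0 := by
  have : IsAddTorsionFree F := .of_isTorsionFree ℝ F
  rw [← self_eq_neg, ← integral_neg, ← integral_neg_eq_self f μ]
  exact integral_congr_ae (.of_forall hf)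

theorem hasDerivAt_integral_smul_comp_smul [SecondCountableTopology E] [CompleteSpace E]
    [CompleteSpace F] {μ : Measure E} {f : E → F} {f' : E →L[ℝ] F} {K : NNReal}
    (hf : LipschitzWith K f) (hf' : HasFDerivAt f f' 0) {g : E → ℝ} (hg : Integrable g μ)
    (hg₁ : Integrable (fun v => g v • v) μ) :
    HasDerivAt (fun s : ℝ => ∫ v, g v • f (s • v) ∂μ) (f' (∫ v, g v • v ∂μ)) 0 := by
  have hlip (v : E) :
      LipschitzOnWith (Real.nnabs (K * ‖g v • v‖)) (fun s : ℝ => g v • f (s • v)) Set.univ := by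
    refine LipschitzOnWith.of_dist_le_mul fun s _ s' _ => ?_
    calc dist (g v • f (s • v)) (g v • f (s' • v))
        = ‖g v‖ * dist (f (s • v)) (f (s' • v)) := dist_smul₀ _ _ _
      _ ≤ ‖g v‖ * (K * dist (s • v) (s' • v)) := by gcongr; exact hf.dist_le_mul _ _
      _ = Real.nnabs (K * ‖g v • v‖) * dist s s' := by
          rw [Real.coe_nnabs, abs_of_nonneg (by positivity), dist_eq_norm, ← sub_smul, norm_smul,
            norm_smul, dist_eq_norm]
          ring
  have hderiv (v : E) : HasDerivAt (fun s : ℝ => g v • f (s • v)) (f' (g v • v)) 0 := by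
    have hline : HasDerivAt (fun s : ℝ => s • v) v 0 := by
      simpa using (hasDerivAt_id (0 : ℝ)).smul_const v
    rw [map_smul]
    exact (HasFDerivAt.comp_hasDerivAt_of_eq 0 hf' hline (zero_smul ℝ v).symm).const_smul (g v)
  have hmeas (s : ℝ) : AEStronglyMeasurable (fun v => g v • f (s • v)) μ :=
    hg.aestronglyMeasurable.smul
      (hf.continuous.comp (continuous_const_smul s)).aestronglyMeasurable
  have hint : Integrable (fun v => g v • f ((0 : ℝ) • v)) μ := by
    simpa only [zero_smul] using hg.smul_const (f 0)
  rw [← f'.integral_comp_comm hg₁]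
  exact (hasDerivAt_integral_of_dominated_loc_of_lip Filter.univ_mem (.of_forall hmeas) hint
    (f'.integrable_comp hg₁).aestronglyMeasurable (.of_forall hlip) (hg₁.norm.const_mul _)
    (.of_forall hderiv)).2

lemma integrable_norm_pow_mul_exp_neg_mul_norm_sq [FiniteDimensional ℝ E] (μ : Measure E)
    [μ.IsAddHaarMeasure] (k : ℕ) {c : ℝ} (hc : 0 < c) :
    Integrable (fun v : E => ‖v‖ ^ k * Real.exp (-c * ‖v‖ ^ 2)) μ := by
  cases subsingleton_or_nontrivial E
  · exact .of_finite
  · rw [integrable_fun_norm_addHaar μ (f := fun ρ => ρ ^ k * Real.exp (-c * ρ ^ 2))]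
    have hexp : (-1 : ℝ) < ((Module.finrank ℝ E - 1 + k : ℕ) : ℝ) :=
      neg_one_lt_zero.trans_le (Nat.cast_nonneg _)
    refine (integrableOn_rpow_mul_exp_neg_mul_sq hc hexp).congr_fun (fun ρ _ => ?_)
      measurableSet_Ioi
    simp only [Real.rpow_natCast, smul_eq_mul, pow_add, mul_assoc]

end Integrals

section QuadraticForm

variable {E : Type*} [NormedAddCommGroup E] [NormedSpace ℝ E] [FiniteDimensional ℝ E]

lemma continuous_quadraticForm (Q : QuadraticForm ℝ E) : Continuous Q := by
  have hpolar : Continuous fun v => Q.associated.toContinuousBilinearMap v v := by fun_prop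
  simpa only [LinearMap.toContinuousBilinearMap_apply, QuadraticMap.associated_eq_self_apply]
    using hpolar

lemma exists_pos_mul_norm_sq_le_of_posDef {Q : QuadraticForm ℝ E} (hQ : Q.PosDef) :
    ∃ c : ℝ, 0 < c ∧ ∀ v, c * ‖v‖ ^ 2 ≤ Q v := by
  have : ProperSpace E := FiniteDimensional.proper ℝ E
  cases subsingleton_or_nontrivial E
  · exact ⟨1, one_pos, fun v => by simp [Subsingleton.elim v 0]⟩
  obtain ⟨u, hu, hmin⟩ := (isCompact_sphere (0 : E) 1).exists_isMinOn
    (NormedSpace.sphere_nonempty.2 zero_le_one) (continuous_quadraticForm Q).continuousOn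
  refine ⟨Q u, hQ u (ne_zero_of_mem_unit_sphere ⟨u, hu⟩), fun v => ?_⟩
  rcases eq_or_ne v 0 with rfl | hv
  · simp
  have hunit : ‖v‖⁻¹ • v ∈ Metric.sphere (0 : E) 1 := by
    simpa using norm_smul_inv_norm (𝕜 := ℝ) hv
  calc Q u * ‖v‖ ^ 2 ≤ Q (‖v‖⁻¹ • v) * ‖v‖ ^ 2 := by gcongr; exact hmin hunit
    _ = Q v := by
        rw [QuadraticMap.map_smul, smul_eq_mul]
        field_simp

end QuadraticForm

section GaussianDensity

variable {n : ℕ} {R : Matrix (Fin n) (Fin n) ℝ}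

lemma continuous_mvnDens (R : Matrix (Fin n) (Fin n) ℝ) : Continuous (mvnDens R) := by
  unfold mvnDens
  fun_prop

lemma even_mvnDens (R : Matrix (Fin n) (Fin n) ℝ) : Function.Even (mvnDens R) := fun α => by
  simp only [mvnDens, mulVec_neg, dotProduct_neg, neg_dotProduct, neg_neg]

lemma exists_norm_mvnDens_le (hR : R.PosDef) :
    ∃ C c : ℝ, 0 < c ∧ ∀ α, ‖mvnDens R α‖ ≤ C * Real.exp (-c * ‖α‖ ^ 2) := by
  obtain ⟨c, hc, hle⟩ := exists_pos_mul_norm_sq_le_of_posDef hR.inv.toQuadraticForm'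
  refine ⟨‖(2 * Real.pi) ^ (-(n : ℝ) / 2) * R.det ^ (-(1 : ℝ) / 2)‖, c / 2, half_pos hc,
    fun α => ?_⟩
  have hquad : c * ‖α‖ ^ 2 ≤ α ⬝ᵥ (R⁻¹ *ᵥ α) := by
    simpa [Matrix.toQuadraticForm', Matrix.toLinearMap₂'_apply'] using hle α
  rw [mvnDens, norm_mul, Real.norm_of_nonneg (Real.exp_pos _).le]
  refine mul_le_mul_of_nonneg_left (Real.exp_le_exp.2 ?_) (norm_nonneg _)
  linarith

lemma integrable_mvnDens (hR : R.PosDef) : Integrable (mvnDens R) := by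
  obtain ⟨C, c, hc, hle⟩ := exists_norm_mvnDens_le hR
  refine ((integrable_norm_pow_mul_exp_neg_mul_norm_sq volume 0 hc).const_mul C).mono'
    (continuous_mvnDens R).aestronglyMeasurable (.of_forall fun α => ?_)
  simpa only [pow_zero, one_mul] using hle α

lemma integrable_mvnDens_smul (hR : R.PosDef) : Integrable fun α => mvnDens R α • α := by
  obtain ⟨C, c, hc, hle⟩ := exists_norm_mvnDens_le hR
  refine ((integrable_norm_pow_mul_exp_neg_mul_norm_sq volume 1 hc).const_mul C).mono'
    ((continuous_mvnDens R).smul continuous_id).aestronglyMeasurable (.of_forall fun α => ?_)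
  calc ‖mvnDens R α • α‖ = ‖α‖ * ‖mvnDens R α‖ := by rw [norm_smul, mul_comm]
    _ ≤ ‖α‖ * (C * Real.exp (-c * ‖α‖ ^ 2)) := by gcongr; exact hle α
    _ = C * (‖α‖ ^ 1 * Real.exp (-c * ‖α‖ ^ 2)) := by ring

lemma integral_mvnDens_smul (R : Matrix (Fin n) (Fin n) ℝ) : ∫ α, mvnDens R α • α = 0 :=
  integral_eq_zero_of_odd ((even_mvnDens R).smul_odd fun _ => rfl)

end GaussianDensity

section BinomialLikelihood

lemma bfun_nonneg (w : ℝ) : 0 ≤ bfun w :=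
  Real.log_nonneg (le_add_of_nonneg_right (Real.exp_pos w).le)

lemma le_bfun (w : ℝ) : w ≤ bfun w := by
  rw [bfun, Real.le_log_iff_exp_le (by positivity)]
  exact le_add_of_nonneg_left zero_le_one

lemma hasDerivAt_bfun (w : ℝ) : HasDerivAt bfun (Real.sigmoid w) w := by
  have h := ((Real.hasDerivAt_exp w).const_add 1).log (by positivity)
  refine h.congr_deriv ?_
  rw [Real.sigmoid_def, Real.exp_neg]
  field_simp
  ring

/-- The log-likelihood `y w - m b(w)` of `y` successes in `m` binomial trials with log-odds `w`, up
to the binomial coefficient. The counts are real so that no casts appear. -/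
def binomialLogLik (y m w : ℝ) : ℝ := y * w - m * bfun w

lemma hasDerivAt_binomialLogLik (y m w : ℝ) :
    HasDerivAt (binomialLogLik y m) (y - m * Real.sigmoid w) w := by
  exact (hasDerivAt_const_mul y).sub ((hasDerivAt_bfun w).const_mul m)

lemma differentiable_binomialLogLik (y m : ℝ) : Differentiable ℝ (binomialLogLik y m) :=
  fun w => (hasDerivAt_binomialLogLik y m w).differentiableAt

variable {y m : ℝ}

lemma binomialLogLik_nonpos (hy : 0 ≤ y) (hym : y ≤ m) (w : ℝ) : binomialLogLik y m w ≤ 0 :=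
  sub_nonpos.2 <| calc
    y * w ≤ y * bfun w := by gcongr; exact le_bfun w
    _ ≤ m * bfun w := by gcongr; exact bfun_nonneg w

lemma lipschitzWith_binomialLogLik (hy : 0 ≤ y) (hym : y ≤ m) :
    LipschitzWith m.toNNReal (binomialLogLik y m) := by
  refine lipschitzWith_of_nnnorm_deriv_le (differentiable_binomialLogLik y m) fun w => ?_
  have hm : 0 ≤ m := hy.trans hym
  have hlower : 0 ≤ m * Real.sigmoid w := mul_nonneg hm (Real.sigmoid_nonneg w)
  have hupper : m * Real.sigmoid w ≤ m := mul_le_of_le_one_right hm (Real.sigmoid_le_one w)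
  rw [(hasDerivAt_binomialLogLik y m w).deriv, ← NNReal.coe_le_coe, coe_nnnorm,
    Real.coe_toNNReal m hm, Real.norm_eq_abs, abs_le]
  constructor <;> linarith

variable {ι : Type*} [Fintype ι]

/-- The conditional likelihood, up to a constant factor, of independent binomial counts `y t` out of
`m t` given random effects `α`, where the log-odds of observation `t` are `η t + α t`. -/
def binomialLik (y m η α : ι → ℝ) : ℝ :=
  Real.exp (∑ t, binomialLogLik (y t) (m t) (η t + α t))

lemma differentiable_binomialLik (y m η : ι → ℝ) : Differentiable ℝ (binomialLik y m η) := by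
  have hlog (t : ι) := differentiable_binomialLogLik (y t) (m t)
  unfold binomialLik
  fun_prop

lemma lipschitzWith_binomialLik {y m : ι → ℝ} (hy : ∀ t, 0 ≤ y t) (hym : ∀ t, y t ≤ m t)
    (η : ι → ℝ) : LipschitzWith (∑ t, (m t).toNNReal) (binomialLik y m η) := by
  have hshift (t : ι) : LipschitzWith (m t).toNNReal
      fun a => binomialLogLik (y t) (m t) (η t + a) := by
    simpa only [mul_one] using! (lipschitzWith_binomialLogLik (hy t) (hym t)).comp
      (isometry_add_left (η t)).lipschitz
  have hnonpos (α : ι → ℝ) : ∑ t, binomialLogLik (y t) (m t) (η t + α t) ≤ 0 :=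
    Finset.sum_nonpos fun t _ => binomialLogLik_nonpos (hy t) (hym t) _
  have hsum := (lipschitzWith_sum_comp_apply hshift).lipschitzOnWith (s := Set.univ)
  simpa only [one_mul, lipschitzOnWith_univ] using!
    lipschitzOnWith_exp_Iic_zero.comp hsum fun α _ => hnonpos α

end BinomialLikelihood

theorem statement3_general {ι : Type*} [Fintype ι] {y m : ι → ℝ} (hy : ∀ t, 0 ≤ y t)
    (hym : ∀ t, y t ≤ m t) (η : ι → ℝ) {μ : Measure (ι → ℝ)} {g : (ι → ℝ) → ℝ}
    (hg : Integrable g μ) (hg₁ : Integrable (fun α => g α • α) μ)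
    (hmean : ∫ α, g α • α ∂μ = 0) :
    HasDerivAt (fun s : ℝ => ∫ α, binomialLik y m η (s • α) * g α ∂μ) 0 0 := by
  have h := hasDerivAt_integral_smul_comp_smul (lipschitzWith_binomialLik hy hym η)
    (differentiable_binomialLik y m η 0).hasFDerivAt hg hg₁
  simpa only [hmean, map_zero, smul_eq_mul, mul_comm (g _)] using h

/-- With
`Λ(s) = ∫_{ℝⁿ} exp( Σ_t [ y_t (x_tᵀβ + s α_t) − m_t b(x_tᵀβ + s α_t) ] ) dN(0,R)(α)`
for `s ∈ ℝ`, the function `Λ` is differentiable at `s = 0` and `Λ'(0) = 0`. -/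
theorem statement3 (n r : ℕ) (hn : 1 ≤ n)
    (m : Fin n → ℕ) (hm : ∀ t, 1 ≤ m t)
    (y : Fin n → ℕ) (hy : ∀ t, y t ≤ m t)
    (x : Fin n → Fin r → ℝ) (β : Fin r → ℝ)
    (R : Matrix (Fin n) (Fin n) ℝ) (hRsymm : R.IsSymm) (hRpos : R.PosDef)
    (Λ : ℝ → ℝ)
    (hΛ : ∀ s, Λ s = ∫ α : Fin n → ℝ,
        Real.exp (∑ t, ((y t : ℝ) * (x t ⬝ᵥ β + s * α t)
          - (m t : ℝ) * bfun (x t ⬝ᵥ β + s * α t))) * mvnDens R α) :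
    HasDerivAt Λ 0 0 := by
  rw [funext hΛ]
  exact statement3_general (fun t => (y t).cast_nonneg) (fun t => Nat.cast_le.2 (hy t))
    (fun t => x t ⬝ᵥ β) (integrable_mvnDens hRpos) (integrable_mvnDens_smul hRpos)
    (integral_mvnDens_smul R)

end
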